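/- Let n ≥ 3, let γ ∈ ℝⁿ with |γ| = 1, let s > 0, and let Ω = ℝⁿ ∖ {√s·γ, −√s·γ}. Define v(x) = (−2γ·x/√s)/(|x|²/s + 1). Then |v(x)| < 1 for all x ∈ Ω, so φ(x) = (1/√s)·artanh(v(x)) is a well-defined smooth function on Ω; moreover ∇φ is nowhere vanishing on Ω, and for all x ∈ Ω: ∇φ(x)/|∇φ(x)|² = (γ·x)x − (1/2)|x|²γ − (s/2)γ. -/

import Mathlib

open scoped BigOperators
open Matrix

noncomputable section

/-- Euclidean dot product on `Fin n → ℝ`. -/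
def dotp {n : ℕ} (u v : Fin n → ℝ) : ℝ := ∑ i, u i * v i

/-- Squared Euclidean norm on `Fin n → ℝ`. -/
def normSq {n : ℕ} (u : Fin n → ℝ) : ℝ := ∑ i, u i ^ 2

/-- `pd X j k x = ∂ⱼ Xₖ (x)`, the partial derivative of the `k`-th component of the
vector field `X` in the `j`-th coordinate direction. -/
def pd {n : ℕ} (X : (Fin n → ℝ) → (Fin n → ℝ)) (j k : Fin n) (x : Fin n → ℝ) : ℝ :=
  fderiv ℝ (fun y => X y k) x (Pi.single j (1 : ℝ))

/-- `pdS f j x = ∂ⱼ f (x)` for a scalar function `f`. -/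
def pdS {n : ℕ} (f : (Fin n → ℝ) → ℝ) (j : Fin n) (x : Fin n → ℝ) : ℝ :=
  fderiv ℝ f x (Pi.single j (1 : ℝ))

/-- Second partial derivative `pd2 X a b c x = ∂ₐ ∂_b X_c (x)`. -/
def pd2 {n : ℕ} (X : (Fin n → ℝ) → (Fin n → ℝ)) (a b c : Fin n) (x : Fin n → ℝ) : ℝ :=
  fderiv ℝ (fun y => pd X b c y) x (Pi.single a (1 : ℝ))

/-- Gradient of a scalar function on `Fin n → ℝ`, as a vector field. -/
def grad {n : ℕ} (φ : (Fin n → ℝ) → ℝ) (x : Fin n → ℝ) : Fin n → ℝ :=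
  fun i => fderiv ℝ φ x (Pi.single i (1 : ℝ))

/-- `X` is a conformal Killing vector field on `Ω`:
`∂ⱼXₖ + ∂ₖXⱼ = λ δⱼₖ` on `Ω` for some scalar function `λ`. -/
def IsCKF {n : ℕ} (Ω : Set (Fin n → ℝ)) (X : (Fin n → ℝ) → (Fin n → ℝ)) : Prop :=
  ∃ lam : (Fin n → ℝ) → ℝ, ∀ x ∈ Ω, ∀ j k : Fin n,
    pd X j k x + pd X k j x = lam x * (if j = k then (1 : ℝ) else 0)

/-- The model conformal Killing field `X_{(α,c,B,γ)}(x) = (α·x)x − ½|x|²α + cx + Bx + γ`. -/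
def Xmodel {n : ℕ} (α : Fin n → ℝ) (c : ℝ) (B : Matrix (Fin n) (Fin n) ℝ) (γ : Fin n → ℝ)
    (x : Fin n → ℝ) : Fin n → ℝ :=
  fun k => dotp α x * x k - (1 / 2) * normSq x * α k + c * x k + B.mulVec x k + γ k

/-- The skew-symmetric matrix `u ∧ v` with entries `(u∧v)ⱼₖ = uⱼvₖ − vⱼuₖ`. -/
def wedge {n : ℕ} (u v : Fin n → ℝ) : Matrix (Fin n) (Fin n) ℝ :=
  Matrix.of fun j k => u j * v k - v j * u k

/-- The real inverse hyperbolic tangent, `artanh t = ½ log((1+t)/(1−t))` for `|t| < 1`. -/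
def artanh (t : ℝ) : ℝ := (1 / 2) * Real.log ((1 + t) / (1 - t))

/-- The function `v(x) = (−2γ·x/√s)/(|x|²/s + 1)`. -/
def v15 {n : ℕ} (γ : Fin n → ℝ) (s : ℝ) (x : Fin n → ℝ) : ℝ :=
  (-2 * dotp γ x / Real.sqrt s) / (normSq x / s + 1)

/-- The weight `φ(x) = (1/√s) artanh(v(x))`. -/
def phi15 {n : ℕ} (γ : Fin n → ℝ) (s : ℝ) (x : Fin n → ℝ) : ℝ :=
  (Real.sqrt s)⁻¹ * artanh (v15 γ s x)

/-!
Put `p = √s γ`. Since `|γ| = 1`, `1 ± v(x) = |x ∓ p|² / (|x|² + s)`, so `|v| < 1` away from `±p`,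
and `φ` is `1/√s` times the two-pole potential `log (|x - p| / |x + p|)`. Write `ι(u) = u / |u|²`
for inversion in the unit sphere. As `∇ log |x| = ι(x)`, the gradient of the potential is
`ι(x - p) - ι(x + p)`, which is nonzero because `ι` is injective. The identity
`|ι(a) - ι(b)|² = |a - b|² / (|a|² |b|²)` then evaluates `ι(∇φ)`, which is the field `∇φ / |∇φ|²`.
-/

section DotProduct

variable {n : ℕ} (u v : Fin n → ℝ) (c : ℝ)

lemma normSq_eq_dotProduct : normSq u = u ⬝ᵥ u := by
  simp only [normSq, dotProduct, sq]

lemma dotp_eq_dotProduct : dotp u v = u ⬝ᵥ v := rfl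

lemma normSq_nonneg : 0 ≤ normSq u :=
  Finset.sum_nonneg fun i _ => sq_nonneg (u i)

variable {u} in
lemma normSq_eq_zero : normSq u = 0 ↔ u = 0 := by
  rw [normSq_eq_dotProduct, dotProduct_self_eq_zero]

variable {u} in
lemma normSq_pos : 0 < normSq u ↔ u ≠ 0 :=
  (normSq_nonneg u).lt_iff_ne'.trans normSq_eq_zero.not

variable {u v} in
lemma normSq_sub_pos : 0 < normSq (u - v) ↔ u ≠ v :=
  normSq_pos.trans sub_ne_zero

variable {c} in
lemma normSq_add_pos (hc : 0 < c) : 0 < normSq u + c :=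
  add_pos_of_nonneg_of_pos (normSq_nonneg u) hc

lemma normSq_neg : normSq (-u) = normSq u := by
  simp only [normSq_eq_dotProduct, neg_dotProduct_neg]

lemma normSq_smul : normSq (c • u) = c ^ 2 * normSq u := by
  simp only [normSq_eq_dotProduct, smul_dotProduct, dotProduct_smul, smul_eq_mul]
  ring

lemma normSq_sub : normSq (u - v) = normSq u - 2 * dotp u v + normSq v := by
  simp only [normSq_eq_dotProduct, dotp_eq_dotProduct, sub_dotProduct, dotProduct_sub,
    dotProduct_comm v u]
  ring

lemma dotp_comm : dotp u v = dotp v u := dotProduct_comm u v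

lemma dotp_neg_left : dotp (-u) v = -dotp u v := neg_dotProduct u v

lemma dotp_smul_left : dotp (c • u) v = c * dotp u v := smul_dotProduct c u v

end DotProduct

section Inversion

variable {n : ℕ}

/-- Inversion `u ↦ u / |u|²` in the unit sphere, with the junk value `0` at `0`. Applied to `∇φ` it
gives the vector field associated with a limiting Carleman weight `φ`. -/
def unitInversion (u : Fin n → ℝ) : Fin n → ℝ := (normSq u)⁻¹ • u

lemma unitInversion_smul (c : ℝ) (u : Fin n → ℝ) :
    unitInversion (c • u) = c⁻¹ • unitInversion u := by
  rcases eq_or_ne c 0 with rfl | hc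
  · simp [unitInversion]
  · simp only [unitInversion, normSq_smul, smul_smul]
    congr 1
    field_simp

variable {a b : Fin n → ℝ}

lemma unitInversion_sub_unitInversion (ha : a ≠ 0) (hb : b ≠ 0) :
    unitInversion a - unitInversion b =
      (normSq a * normSq b)⁻¹ • (normSq b • a - normSq a • b) := by
  have hA : normSq a ≠ 0 := (normSq_pos.2 ha).ne'
  have hB : normSq b ≠ 0 := (normSq_pos.2 hb).ne'
  simp only [unitInversion, smul_sub, smul_smul]
  congr 2 <;> field_simp

lemma normSq_normSq_smul_sub_normSq_smul (a b : Fin n → ℝ) :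
    normSq (normSq b • a - normSq a • b) = normSq a * normSq b * normSq (a - b) := by
  simp only [normSq_sub, normSq_smul, dotp_smul_left, dotp_comm a (_ • b), dotp_comm b a]
  ring

lemma normSq_unitInversion_sub_unitInversion (ha : a ≠ 0) (hb : b ≠ 0) :
    normSq (unitInversion a - unitInversion b) = normSq (a - b) / (normSq a * normSq b) := by
  have hA : normSq a ≠ 0 := (normSq_pos.2 ha).ne'
  have hB : normSq b ≠ 0 := (normSq_pos.2 hb).ne'
  rw [unitInversion_sub_unitInversion ha hb, normSq_smul, normSq_normSq_smul_sub_normSq_smul]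
  field_simp

lemma unitInversion_injOn : Set.InjOn (unitInversion (n := n)) {0}ᶜ := by
  intro a ha b hb hab
  have hdist := normSq_unitInversion_sub_unitInversion ha hb
  have hAB : normSq a * normSq b ≠ 0 := (mul_pos (normSq_pos.2 ha) (normSq_pos.2 hb)).ne'
  rw [sub_eq_zero.2 hab, normSq_eq_zero.2 rfl, eq_comm, div_eq_zero_iff, or_iff_left hAB,
    normSq_eq_zero] at hdist
  exact sub_eq_zero.1 hdist

lemma unitInversion_unitInversion_sub_unitInversion (ha : a ≠ 0) (hb : b ≠ 0) :
    unitInversion (unitInversion a - unitInversion b) =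
      (normSq (a - b))⁻¹ • (normSq b • a - normSq a • b) := by
  have hA : normSq a ≠ 0 := (normSq_pos.2 ha).ne'
  have hB : normSq b ≠ 0 := (normSq_pos.2 hb).ne'
  rw [unitInversion, normSq_unitInversion_sub_unitInversion ha hb,
    unitInversion_sub_unitInversion ha hb, smul_smul]
  congr 1
  field_simp

end Inversion

section Gradient

variable {n : ℕ} {f g : (Fin n → ℝ) → ℝ} {x : Fin n → ℝ}

lemma grad_const_mul (c : ℝ) (hf : DifferentiableAt ℝ f x) :
    grad (fun y => c * f y) x = c • grad f x := by
  ext i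
  simp only [grad, fderiv_const_mul hf, _root_.smul_apply, Pi.smul_apply]

lemma grad_fun_sub (hf : DifferentiableAt ℝ f x) (hg : DifferentiableAt ℝ g x) :
    grad (fun y => f y - g y) x = grad f x - grad g x := by
  ext i
  simp only [grad, fderiv_fun_sub hf hg, _root_.sub_apply, Pi.sub_apply]

lemma grad_log (hf : DifferentiableAt ℝ f x) (hx : f x ≠ 0) :
    grad (fun y => Real.log (f y)) x = (f x)⁻¹ • grad f x := by
  ext i
  simp only [grad, fderiv.log hf hx, _root_.smul_apply, Pi.smul_apply]

lemma grad_comp_sub_const (f : (Fin n → ℝ) → ℝ) (p x : Fin n → ℝ) :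
    grad (fun y => f (y - p)) x = grad f (x - p) := by
  ext i
  simp only [grad, fderiv_comp_sub]

lemma contDiff_normSq {k : WithTop ℕ∞} : ContDiff ℝ k (normSq (n := n)) := by
  unfold normSq
  fun_prop

lemma grad_normSq (x : Fin n → ℝ) : grad normSq x = (2 : ℝ) • x := by
  ext i
  have hderiv : HasFDerivAt normSq
      (∑ j, (2 * x j) • (ContinuousLinearMap.proj j : (Fin n → ℝ) →L[ℝ] ℝ)) x := by
    refine HasFDerivAt.fun_sum fun j _ => ?_
    simpa using (hasFDerivAt_apply (𝕜 := ℝ) j x).pow 2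
  simp [grad, hderiv.fderiv, Pi.single_apply]

lemma contDiffAt_log_normSq_sub {k : WithTop ℕ∞} {p : Fin n → ℝ} (hx : x ≠ p) :
    ContDiffAt ℝ k (fun y => Real.log (normSq (y - p))) x :=
  ContDiffAt.log (contDiff_normSq.comp (contDiff_id.sub contDiff_const)).contDiffAt
    (normSq_sub_pos.2 hx).ne'

lemma grad_log_normSq_sub {p : Fin n → ℝ} (hx : x ≠ p) :
    grad (fun y => Real.log (normSq (y - p))) x = (2 : ℝ) • unitInversion (x - p) := by
  have hdiff : DifferentiableAt ℝ (fun y => normSq (y - p)) x :=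
    (contDiff_normSq.comp (contDiff_id.sub contDiff_const)).differentiable one_ne_zero x
  rw [grad_log hdiff (normSq_sub_pos.2 hx).ne', grad_comp_sub_const, grad_normSq, unitInversion,
    smul_comm]

end Gradient

section LogDistRatio

open scoped Topology

variable {n : ℕ} {p q x : Fin n → ℝ}

/-- The two-pole potential `log (|x - p| / |x - q|)`, written with squared distances so that no
square roots occur. -/
def logDistRatio (p q x : Fin n → ℝ) : ℝ :=
  (1 / 2) * Real.log (normSq (x - p) / normSq (x - q))

lemma logDistRatio_eventuallyEq (hp : x ≠ p) (hq : x ≠ q) :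
    logDistRatio p q =ᶠ[𝓝 x] fun y =>
      (1 / 2) * (Real.log (normSq (y - p)) - Real.log (normSq (y - q))) := by
  filter_upwards [isOpen_ne.mem_nhds hp, isOpen_ne.mem_nhds hq] with y hyp hyq
  rw [logDistRatio, Real.log_div (normSq_sub_pos.2 hyp).ne' (normSq_sub_pos.2 hyq).ne']

lemma contDiffAt_logDistRatio {k : WithTop ℕ∞} (hp : x ≠ p) (hq : x ≠ q) :
    ContDiffAt ℝ k (logDistRatio p q) x :=
  (contDiffAt_const.mul ((contDiffAt_log_normSq_sub hp).sub
    (contDiffAt_log_normSq_sub hq))).congr_of_eventuallyEq (logDistRatio_eventuallyEq hp hq)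

lemma grad_logDistRatio (hp : x ≠ p) (hq : x ≠ q) :
    grad (logDistRatio p q) x = unitInversion (x - p) - unitInversion (x - q) := by
  have hdiff {r : Fin n → ℝ} (hr : x ≠ r) :
      DifferentiableAt ℝ (fun y => Real.log (normSq (y - r))) x :=
    (contDiffAt_log_normSq_sub hr).differentiableAt one_ne_zero
  calc grad (logDistRatio p q) x
      = grad (fun y => (1 / 2) * (Real.log (normSq (y - p)) - Real.log (normSq (y - q)))) x := by
        ext i
        simp only [grad, (logDistRatio_eventuallyEq hp hq).fderiv_eq]
    _ = (1 / 2 : ℝ) • ((2 : ℝ) • unitInversion (x - p) - (2 : ℝ) • unitInversion (x - q)) := by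
        rw [grad_const_mul _ ((hdiff hp).fun_sub (hdiff hq)), grad_fun_sub (hdiff hp) (hdiff hq),
          grad_log_normSq_sub hp, grad_log_normSq_sub hq]
    _ = unitInversion (x - p) - unitInversion (x - q) := by
        rw [← smul_sub, smul_smul, one_div_mul_cancel two_ne_zero, one_smul]

lemma grad_logDistRatio_ne_zero (hpq : p ≠ q) (hp : x ≠ p) (hq : x ≠ q) :
    grad (logDistRatio p q) x ≠ 0 := by
  rw [grad_logDistRatio hp hq, sub_ne_zero]
  exact unitInversion_injOn.ne (sub_ne_zero.2 hp) (sub_ne_zero.2 hq) (sub_right_injective.ne hpq)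

lemma unitInversion_grad_logDistRatio (hp : x ≠ p) (hq : x ≠ q) :
    unitInversion (grad (logDistRatio p q) x) =
      (normSq (p - q))⁻¹ • (normSq (x - q) • (x - p) - normSq (x - p) • (x - q)) := by
  rw [grad_logDistRatio hp hq, unitInversion_unitInversion_sub_unitInversion (sub_ne_zero.2 hp)
    (sub_ne_zero.2 hq), sub_sub_sub_cancel_left, ← normSq_neg, neg_sub]

end LogDistRatio

section Weight

variable {n : ℕ} {γ : Fin n → ℝ} {s : ℝ}

lemma normSq_sub_sqrt_smul (hγ : normSq γ = 1) (hs : 0 ≤ s) (x : Fin n → ℝ) :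
    normSq (x - √s • γ) = normSq x + s - 2 * √s * dotp γ x := by
  rw [normSq_sub, dotp_comm, dotp_smul_left, normSq_smul, hγ, Real.sq_sqrt hs]
  ring

lemma normSq_sub_neg_sqrt_smul (hγ : normSq γ = 1) (hs : 0 ≤ s) (x : Fin n → ℝ) :
    normSq (x - -(√s • γ)) = normSq x + s + 2 * √s * dotp γ x := by
  rw [← smul_neg, normSq_sub_sqrt_smul ((normSq_neg γ).trans hγ) hs, dotp_neg_left]
  ring

lemma v15_eq_div (hs : 0 < s) (γ x : Fin n → ℝ) :
    v15 γ s x = -(2 * √s * dotp γ x) / (normSq x + s) := by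
  have hsqrt : √s ≠ 0 := (Real.sqrt_pos.2 hs).ne'
  have hden : normSq x + s ≠ 0 := (normSq_add_pos x hs).ne'
  rw [v15]
  field_simp
  rw [Real.sq_sqrt hs.le]

lemma one_add_v15 (hγ : normSq γ = 1) (hs : 0 < s) (x : Fin n → ℝ) :
    1 + v15 γ s x = normSq (x - √s • γ) / (normSq x + s) := by
  have hden : normSq x + s ≠ 0 := (normSq_add_pos x hs).ne'
  rw [v15_eq_div hs, normSq_sub_sqrt_smul hγ hs.le]
  field_simp
  ring

lemma one_sub_v15 (hγ : normSq γ = 1) (hs : 0 < s) (x : Fin n → ℝ) :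
    1 - v15 γ s x = normSq (x - -(√s • γ)) / (normSq x + s) := by
  have hden : normSq x + s ≠ 0 := (normSq_add_pos x hs).ne'
  rw [v15_eq_div hs, normSq_sub_neg_sqrt_smul hγ hs.le]
  field_simp
  ring

lemma phi15_eq_logDistRatio (hγ : normSq γ = 1) (hs : 0 < s) :
    phi15 γ s = fun x => (√s)⁻¹ * logDistRatio (√s • γ) (-(√s • γ)) x := by
  ext x
  have hden : normSq x + s ≠ 0 := (normSq_add_pos x hs).ne'
  rw [phi15, artanh, one_add_v15 hγ hs, one_sub_v15 hγ hs, div_div_div_cancel_right₀ hden,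
    logDistRatio]

variable {x : Fin n → ℝ}

lemma abs_v15_lt_one (hγ : normSq γ = 1) (hs : 0 < s) (hp : x ≠ √s • γ)
    (hq : x ≠ -(√s • γ)) : |v15 γ s x| < 1 := by
  have hden : 0 < normSq x + s := normSq_add_pos x hs
  have hadd : 0 < 1 + v15 γ s x := by
    rw [one_add_v15 hγ hs]
    exact div_pos (normSq_sub_pos.2 hp) hden
  have hsub : 0 < 1 - v15 γ s x := by
    rw [one_sub_v15 hγ hs]
    exact div_pos (normSq_sub_pos.2 hq) hden
  exact abs_lt.2 ⟨by linarith, by linarith⟩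

lemma contDiffAt_phi15 {k : WithTop ℕ∞} (hγ : normSq γ = 1) (hs : 0 < s) (hp : x ≠ √s • γ)
    (hq : x ≠ -(√s • γ)) : ContDiffAt ℝ k (phi15 γ s) x := by
  rw [phi15_eq_logDistRatio hγ hs]
  exact contDiffAt_const.mul (contDiffAt_logDistRatio hp hq)

lemma grad_phi15 (hγ : normSq γ = 1) (hs : 0 < s) (hp : x ≠ √s • γ) (hq : x ≠ -(√s • γ)) :
    grad (phi15 γ s) x = (√s)⁻¹ • grad (logDistRatio (√s • γ) (-(√s • γ))) x := by
  rw [phi15_eq_logDistRatio hγ hs,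
    grad_const_mul _ ((contDiffAt_logDistRatio hp hq).differentiableAt one_ne_zero)]

lemma grad_phi15_ne_zero (hγ : normSq γ = 1) (hs : 0 < s) (hp : x ≠ √s • γ)
    (hq : x ≠ -(√s • γ)) : grad (phi15 γ s) x ≠ 0 := by
  have hsqrt : √s ≠ 0 := (Real.sqrt_pos.2 hs).ne'
  have hγ₀ : γ ≠ 0 := normSq_pos.1 (hγ ▸ one_pos)
  have hpoles : √s • γ ≠ -(√s • γ) := self_ne_neg.2 (smul_ne_zero hsqrt hγ₀)
  rw [grad_phi15 hγ hs hp hq]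
  exact smul_ne_zero (inv_ne_zero hsqrt) (grad_logDistRatio_ne_zero hpoles hp hq)

lemma unitInversion_grad_phi15 (hγ : normSq γ = 1) (hs : 0 < s) (hp : x ≠ √s • γ)
    (hq : x ≠ -(√s • γ)) :
    unitInversion (grad (phi15 γ s) x) =
      dotp γ x • x - ((1 / 2) * normSq x) • γ - (s / 2) • γ := by
  have hsqrt : √s ≠ 0 := (Real.sqrt_pos.2 hs).ne'
  have hpoles : normSq (√s • γ - -(√s • γ)) = 4 * √s ^ 2 := by
    rw [sub_neg_eq_add, ← two_smul ℝ, normSq_smul, normSq_smul, hγ]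
    ring
  rw [grad_phi15 hγ hs hp hq, unitInversion_smul, inv_inv, unitInversion_grad_logDistRatio hp hq,
    hpoles, normSq_sub_sqrt_smul hγ hs.le, normSq_sub_neg_sqrt_smul hγ hs.le]
  ext i
  simp only [Pi.smul_apply, Pi.sub_apply, Pi.neg_apply, smul_eq_mul]
  field_simp
  ring

end Weight

theorem stmt_15_general {n : ℕ} (γ : Fin n → ℝ) (hγ : normSq γ = 1)
    (s : ℝ) (hs : 0 < s) (Ω : Set (Fin n → ℝ))
    (hΩdef : Ω = {x | x ≠ Real.sqrt s • γ ∧ x ≠ -(Real.sqrt s • γ)}) :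
    (∀ x ∈ Ω, |v15 γ s x| < 1) ∧
    ContDiffOn ℝ (⊤ : ℕ∞) (phi15 γ s) Ω ∧
    (∀ x ∈ Ω, grad (phi15 γ s) x ≠ 0) ∧
    (∀ x ∈ Ω, (normSq (grad (phi15 γ s) x))⁻¹ • grad (phi15 γ s) x
      = dotp γ x • x - ((1 / 2) * normSq x) • γ - (s / 2) • γ) := by
  subst hΩdef
  exact ⟨fun x ⟨hp, hq⟩ => abs_v15_lt_one hγ hs hp hq,
    fun x ⟨hp, hq⟩ => (contDiffAt_phi15 hγ hs hp hq).contDiffWithinAt,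
    fun x ⟨hp, hq⟩ => grad_phi15_ne_zero hγ hs hp hq,
    fun x ⟨hp, hq⟩ => unitInversion_grad_phi15 hγ hs hp hq⟩

/-- on `ℝⁿ ∖ {√s γ, −√s γ}` one has `|v| < 1`, so `phi15` is a
well-defined smooth function with nonvanishing gradient, whose associated conformal
Killing field is `(γ·x)x − ½|x|²γ − (s/2)γ`. -/
theorem stmt_15 {n : ℕ} (hn : 3 ≤ n) (γ : Fin n → ℝ) (hγ : normSq γ = 1)
    (s : ℝ) (hs : 0 < s) (Ω : Set (Fin n → ℝ))
    (hΩdef : Ω = {x | x ≠ Real.sqrt s • γ ∧ x ≠ -(Real.sqrt s • γ)}) :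
    (∀ x ∈ Ω, |v15 γ s x| < 1) ∧
    ContDiffOn ℝ (⊤ : ℕ∞) (phi15 γ s) Ω ∧
    (∀ x ∈ Ω, grad (phi15 γ s) x ≠ 0) ∧
    (∀ x ∈ Ω, (normSq (grad (phi15 γ s) x))⁻¹ • grad (phi15 γ s) x
      = dotp γ x • x - ((1 / 2) * normSq x) • γ - (s / 2) • γ) :=
  stmt_15_general γ hγ s hs Ω hΩdef
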